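/- arXiv:1605.04573 — 2 statements merged into one kernel-verified Lean document; each statement's English description precedes it below -/
import Mathlib

section
/- Let G be a real symmetric 4×4 matrix of the form G = -(1/c²) e₀ e₀ᵀ + Σ_{i=1}^{3} eᵢ eᵢᵀ for a basis e₀,…,e₃ with dual basis e₀',…,e₃'. Set W := {z : ⟪e₀', z⟫ = 0}. Then for every nonzero z ∈ W one has z ⬝ (G⁻¹ z) > 0; that is, G⁻¹ is positive definite on the hyperplane W. -/
open Matrix

/-!
A matrix `∑ k, d k • e k (e k)ᵀ` with nonzero weights is inverted by replacing the weights by their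
inverses and the basis `e` by its dual basis `e'`. The inverse therefore has the quadratic form
`z ↦ ∑ k, (d k)⁻¹ * ⟨e' k, z⟩ ^ 2`, and on the hyperplane `⟨e' 0, z⟩ = 0` the only negative term
vanishes.
-/

/-- Two families of vectors are biorthogonal if their pairwise dot products are given by the
Kronecker delta. When the families are indexed by the coordinates themselves, this expresses
that they are bases dual to each other. -/
def IsBiorthogonal {ι n R : Type*} [DecidableEq ι] [Fintype n] [CommSemiring R]
    (u v : ι → n → R) : Prop :=
  ∀ k l, u k ⬝ᵥ v l = if k = l then 1 else 0

namespace IsBiorthogonal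

theorem sum_smul_vecMulVec_mul_sum_smul_vecMulVec {ι l m n R : Type*} [Fintype ι] [DecidableEq ι]
    [Fintype m] [CommSemiring R] {u v : ι → m → R} (h : IsBiorthogonal u v) (a b : ι → R)
    (x : ι → l → R) (y : ι → n → R) :
    (∑ k, a k • vecMulVec (x k) (u k)) * (∑ k, b k • vecMulVec (v k) (y k)) =
      ∑ k, (a k * b k) • vecMulVec (x k) (y k) := by
  have hterm (i j : ι) : a i • vecMulVec (x i) (u i) * b j • vecMulVec (v j) (y j) =
      if i = j then (a i * b j) • vecMulVec (x i) (y j) else 0 := by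
    rw [Matrix.smul_mul, Matrix.mul_smul, vecMulVec_mul_vecMulVec, vecMulVec_smul, h i j,
      smul_smul]
    split_ifs <;> simp only [one_smul, zero_smul, smul_zero]
  simp only [Matrix.sum_mul, Matrix.mul_sum, hterm, Finset.sum_ite_eq', Finset.mem_univ, if_true]

section Basis

variable {n R : Type*} [Fintype n] [DecidableEq n] [CommRing R]

theorem sum_vecMulVec_eq_one {u v : n → n → R} (h : IsBiorthogonal u v) :
    ∑ k, vecMulVec (u k) (v k) = 1 := by
  have hvu : of v * (of u)ᵀ = 1 := by
    ext k l
    exact (dotProduct_comm _ _).trans ((h l k).trans (by simp only [one_apply, eq_comm]))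
  calc ∑ k, vecMulVec (u k) (v k) = (of u)ᵀ * of v := by
        ext i j
        simp only [Matrix.sum_apply, vecMulVec_apply, Matrix.mul_apply, transpose_apply, of_apply]
    _ = 1 := mul_eq_one_comm.mp hvu

theorem sum_dotProduct_smul {u v : n → n → R} (h : IsBiorthogonal u v) (z : n → R) :
    ∑ k, (u k ⬝ᵥ z) • v k = z :=
  calc ∑ k, (u k ⬝ᵥ z) • v k = z ᵥ* ∑ k, vecMulVec (u k) (v k) := by
        simp only [vecMul_sum, vecMul_vecMulVec, dotProduct_comm z]
    _ = z := by rw [h.sum_vecMulVec_eq_one, vecMul_one]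

theorem exists_dotProduct_ne_zero {u v : n → n → R} (h : IsBiorthogonal u v)
    {z : n → R} (hz : z ≠ 0) : ∃ k, u k ⬝ᵥ z ≠ 0 := by
  contrapose! hz
  rw [← h.sum_dotProduct_smul z]
  simp only [hz, zero_smul, Finset.sum_const_zero]

end Basis

theorem inv_sum_smul_vecMulVec {n K : Type*} [Fintype n] [DecidableEq n] [Field K]
    {u u' v v' : n → n → K} (hu : IsBiorthogonal u' u) (hv : IsBiorthogonal v' v)
    {d : n → K} (hd : ∀ k, d k ≠ 0) :
    (∑ k, d k • vecMulVec (u k) (v k))⁻¹ = ∑ k, (d k)⁻¹ • vecMulVec (v' k) (u' k) := by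
  apply inv_eq_left_inv
  rw [hu.sum_smul_vecMulVec_mul_sum_smul_vecMulVec]
  simp only [inv_mul_cancel₀ (hd _), one_smul, hv.sum_vecMulVec_eq_one]

end IsBiorthogonal

theorem dotProduct_sum_smul_vecMulVec_self_mulVec {ι n R : Type*} [Fintype ι] [Fintype n]
    [CommSemiring R] (d : ι → R) (u : ι → n → R) (z : n → R) :
    z ⬝ᵥ (∑ k, d k • vecMulVec (u k) (u k)) *ᵥ z = ∑ k, d k * (u k ⬝ᵥ z) ^ 2 := by
  simp only [sum_mulVec, smul_mulVec, vecMulVec_mulVec, dotProduct_sum, dotProduct_smul,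
    op_smul_eq_smul, smul_eq_mul]
  simp only [dotProduct_comm z, sq]

theorem stmt3_general {n K : Type*} [Fintype n] [DecidableEq n] [Field K] [LinearOrder K]
    [IsStrictOrderedRing K] {e e' : n → n → K} (hdual : IsBiorthogonal e' e)
    {d : n → K} (hd : ∀ k, d k ≠ 0) {z : n → K} (hneg : ∀ k, d k < 0 → e' k ⬝ᵥ z = 0)
    (hz : z ≠ 0) :
    0 < z ⬝ᵥ (∑ k, d k • vecMulVec (e k) (e k))⁻¹ *ᵥ z := by
  rw [hdual.inv_sum_smul_vecMulVec hdual hd, dotProduct_sum_smul_vecMulVec_self_mulVec]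
  have hpos {k : n} (hk : e' k ⬝ᵥ z ≠ 0) : 0 < (d k)⁻¹ * (e' k ⬝ᵥ z) ^ 2 :=
    have hdk : 0 < d k := (hd k).lt_or_gt.resolve_left fun hlt => hk (hneg k hlt)
    mul_pos (inv_pos.mpr hdk) (sq_pos_iff.mpr hk)
  have hnonneg (k : n) : 0 ≤ (d k)⁻¹ * (e' k ⬝ᵥ z) ^ 2 := by
    by_cases hk : e' k ⬝ᵥ z = 0
    · simp [hk]
    · exact (hpos hk).le
  obtain ⟨k, hk⟩ := hdual.exists_dotProduct_ne_zero hz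
  exact Finset.sum_pos' (fun i _ => hnonneg i) ⟨k, Finset.mem_univ k, hpos hk⟩

theorem stmt3 (c : ℝ) (hc : 0 < c)
    (e e' : Fin 4 → Fin 4 → ℝ)
    (hbasis : LinearIndependent ℝ e)
    (hdual : ∀ k l, e' k ⬝ᵥ e l = if k = l then (1 : ℝ) else 0)
    (G : Matrix (Fin 4) (Fin 4) ℝ)
    (hGrep : G = ∑ k : Fin 4,
      (if k = 0 then -(1 / c ^ 2) else 1) • vecMulVec (e k) (e k)) :
    ∀ z : Fin 4 → ℝ, e' 0 ⬝ᵥ z = 0 → z ≠ 0 →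
      0 < z ⬝ᵥ G⁻¹.mulVec z := by
  intro z hz0 hz
  subst hGrep
  refine stmt3_general hdual (fun k => by split_ifs <;> simp [hc.ne']) (fun k hk => ?_) hz
  split_ifs at hk with hk0
  exacts [hk0 ▸ hz0, absurd hk zero_le_one.not_gt]
end

section
/- Let c > 0, V ∈ ℝ³ with |V| < c, Q ∈ SO(3), and let Y : ℝ⁴ → ℝ⁴ be the Lorentz transformation Y(t*, x*) = (γt* + (γ/c²) V ⬝ (Qx*), γt*V + B_c(V)Qx*). Suppose s ↦ (t*(s), ξ*(s)) is a C¹ curve, and (t(s), ξ(s)) := Y(t*(s), ξ*(s)); write u* := dξ*/ds / (dt*/ds) and u := dξ/ds / (dt/ds). If 1 + (V ⬝ Q u*)/c² > 0 then u = (V + (1/γ) B_c(V) Q u*) / (1 + (V ⬝ Q u*)/c²). In particular, if Q = Id and V is parallel to u*, then u = (V + u*)/(1 + (V ⬝ u*)/c²) (relativistic addition of velocities). -/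
open Matrix

noncomputable def gammaV (c : ℝ) (V : Fin 3 → ℝ) : ℝ :=
  1 / Real.sqrt (1 - (∑ i, V i ^ 2) / c ^ 2)

noncomputable def Bc (c : ℝ) (V : Fin 3 → ℝ) : Matrix (Fin 3) (Fin 3) ℝ :=
  1 + (gammaV c V ^ 2 / (c ^ 2 * (gammaV c V + 1))) • vecMulVec V V

/-!
The transformation `Y` is linear, so it maps the tangent vector `(dt*/ds, dξ*/ds)` of a
curve to the tangent vector `(dt/ds, dξ/ds)` of its image. A velocity depends only on the line
spanned by the tangent vector, and `Y (1, w) = γ • (1 + V ⬝ Q w / c², V + γ⁻¹ • B Q w)`.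
If `V` is a multiple of `Q w`, then `B` multiplies `Q w` by `γ`.
-/

theorem mk_deriv_eq_map_mk_deriv {𝕜 E₁ E₂ F₁ F₂ : Type*} [NontriviallyNormedField 𝕜]
    [NormedAddCommGroup E₁] [NormedSpace 𝕜 E₁] [NormedAddCommGroup E₂] [NormedSpace 𝕜 E₂]
    [NormedAddCommGroup F₁] [NormedSpace 𝕜 F₁] [NormedAddCommGroup F₂] [NormedSpace 𝕜 F₂]
    (L : E₁ × E₂ →L[𝕜] F₁ × F₂) {f₁ : 𝕜 → E₁} {f₂ : 𝕜 → E₂} {g₁ : 𝕜 → F₁} {g₂ : 𝕜 → F₂} {s : 𝕜}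
    (hf₁ : DifferentiableAt 𝕜 f₁ s) (hf₂ : DifferentiableAt 𝕜 f₂ s)
    (hL : ∀ r, (g₁ r, g₂ r) = L (f₁ r, f₂ r)) :
    (deriv g₁ s, deriv g₂ s) = L (deriv f₁ s, deriv f₂ s) := by
  have hg : HasDerivAt (fun r => (g₁ r, g₂ r)) (L (deriv f₁ s, deriv f₂ s)) s := by
    rw [funext hL]
    exact L.hasFDerivAt.comp_hasDerivAt s (hf₁.hasDerivAt.prodMk hf₂.hasDerivAt)
  have hg₁ : HasDerivAt g₁ (L (deriv f₁ s, deriv f₂ s)).1 s :=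
    (ContinuousLinearMap.fst 𝕜 F₁ F₂).hasFDerivAt.comp_hasDerivAt s hg
  have hg₂ : HasDerivAt g₂ (L (deriv f₁ s, deriv f₂ s)).2 s :=
    (ContinuousLinearMap.snd 𝕜 F₁ F₂).hasFDerivAt.comp_hasDerivAt s hg
  exact Prod.ext hg₁.deriv hg₂.deriv

section LorentzMap

variable {m n : Type*} [Fintype n]

/-- The Lorentz factor `γ` of the velocity `V`, in any number of space dimensions; `gammaV` is the
case of dimension three. It takes the junk value `0` when `|V| ≥ |c| > 0`, and `1` when `c = 0`. -/
noncomputable def lorentzFactor (c : ℝ) (V : n → ℝ) : ℝ :=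
  1 / √(1 - (∑ i, V i ^ 2) / c ^ 2)

/-- The spatial block of the pure Lorentz boost with velocity `V`, in any number of space
dimensions; `Bc` is the case of dimension three. -/
noncomputable def boostMatrix [DecidableEq n] (c : ℝ) (V : n → ℝ) : Matrix n n ℝ :=
  1 + (lorentzFactor c V ^ 2 / (c ^ 2 * (lorentzFactor c V + 1))) • vecMulVec V V

/-- The velocity `dx/dt` of a world line whose tangent vector in space-time is `p = (dt, dx)`. It
takes the junk value `0` when `dt = 0`. -/
noncomputable def velocity {E : Type*} [SMul ℝ E] (p : ℝ × E) : E :=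
  p.1⁻¹ • p.2

/-- The transformation `Y` of space-time: the spatial map `Q` followed by the boost with velocity
`V`. It is a Lorentz transformation in the usual sense when `Q` is orthogonal. -/
noncomputable def lorentzMap [Fintype m] [DecidableEq n] (c : ℝ) (V : n → ℝ) (Q : Matrix n m ℝ) :
    ℝ × (m → ℝ) →ₗ[ℝ] ℝ × (n → ℝ) where
  toFun p :=
    (lorentzFactor c V * p.1 + lorentzFactor c V / c ^ 2 * (V ⬝ᵥ Q *ᵥ p.2),
      (lorentzFactor c V * p.1) • V + (boostMatrix c V * Q) *ᵥ p.2)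
  map_add' p q := by
    ext1
    · simp only [Prod.fst_add, Prod.snd_add, mulVec_add, dotProduct_add]
      ring
    · simp only [Prod.fst_add, Prod.snd_add, mulVec_add]
      module
  map_smul' k p := by
    ext1
    · simp only [Prod.smul_fst, Prod.smul_snd, mulVec_smul, dotProduct_smul, smul_eq_mul,
        RingHom.id_apply]
      ring
    · simp only [Prod.smul_fst, Prod.smul_snd, mulVec_smul, smul_eq_mul, RingHom.id_apply]
      module

theorem velocity_smul {E : Type*} [MulAction ℝ E] {k : ℝ} (hk : k ≠ 0) (p : ℝ × E) :
    velocity (k • p) = velocity p := by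
  rw [velocity, Prod.smul_fst, Prod.smul_snd, smul_smul, smul_eq_mul, mul_inv,
    mul_right_comm, inv_mul_cancel₀ hk, one_mul, velocity]

theorem fst_smul_one_velocity {E : Type*} [MulAction ℝ E] {p : ℝ × E} (hp : p.1 ≠ 0) :
    p.1 • ((1 : ℝ), velocity p) = p :=
  Prod.ext (mul_one p.1) (smul_inv_smul₀ hp p.2)

variable {c : ℝ} {V : n → ℝ}

theorem one_sub_sum_sq_div_pos (hV : ∑ i, V i ^ 2 < c ^ 2) : 0 < 1 - (∑ i, V i ^ 2) / c ^ 2 := by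
  have hc : 0 < c ^ 2 := (Finset.sum_nonneg fun i _ => sq_nonneg (V i)).trans_lt hV
  exact sub_pos.2 ((div_lt_one hc).2 hV)

theorem lorentzFactor_pos (hV : ∑ i, V i ^ 2 < c ^ 2) : 0 < lorentzFactor c V :=
  one_div_pos.2 (Real.sqrt_pos.2 (one_sub_sum_sq_div_pos hV))

theorem lorentzFactor_sq_mul (hV : ∑ i, V i ^ 2 < c ^ 2) :
    lorentzFactor c V ^ 2 * (1 - (V ⬝ᵥ V) / c ^ 2) = 1 := by
  have hpos := one_sub_sum_sq_div_pos hV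
  have hVV : V ⬝ᵥ V = ∑ i, V i ^ 2 := by simp only [dotProduct, sq]
  rw [hVV, lorentzFactor, div_pow, one_pow, Real.sq_sqrt hpos.le, one_div_mul_cancel hpos.ne']

theorem boostMatrix_mulVec [DecidableEq n] (c : ℝ) (V w : n → ℝ) :
    boostMatrix c V *ᵥ w =
      w + (lorentzFactor c V ^ 2 / (c ^ 2 * (lorentzFactor c V + 1)) * (V ⬝ᵥ w)) • V := by
  simp [boostMatrix, add_mulVec, smul_mulVec, vecMulVec_mulVec, mul_smul]

theorem boostMatrix_mulVec_of_eq_smul [DecidableEq n] (hV : ∑ i, V i ^ 2 < c ^ 2) {w : n → ℝ}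
    {a : ℝ} (hVw : V = a • w) : boostMatrix c V *ᵥ w = lorentzFactor c V • w := by
  have hγ := lorentzFactor_pos hV
  have hcoeff : lorentzFactor c V ^ 2 / (c ^ 2 * (lorentzFactor c V + 1)) * (V ⬝ᵥ V) =
      lorentzFactor c V - 1 := by
    have hγ1 : lorentzFactor c V + 1 ≠ 0 := by positivity
    have hγsq := lorentzFactor_sq_mul hV
    rw [← div_div, div_mul_eq_mul_div, div_eq_iff hγ1]
    linear_combination -hγsq
  have hproj : (V ⬝ᵥ w) • V = (V ⬝ᵥ V) • w := by
    have hVV : V ⬝ᵥ V = (V ⬝ᵥ w) * a := by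
      conv_lhs => rw [hVw, dotProduct_smul, ← hVw, smul_eq_mul, mul_comm]
    rw [hVV, mul_smul, ← hVw]
  rw [boostMatrix_mulVec, mul_smul, hproj, smul_smul, hcoeff]
  module

variable [Fintype m] [DecidableEq n] {Q : Matrix n m ℝ}

theorem lorentzMap_one_mk (hV : ∑ i, V i ^ 2 < c ^ 2) (w : m → ℝ) :
    lorentzMap c V Q (1, w) = lorentzFactor c V •
      (1 + (V ⬝ᵥ Q *ᵥ w) / c ^ 2, V + (lorentzFactor c V)⁻¹ • (boostMatrix c V * Q) *ᵥ w) := by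
  ext1
  · change lorentzFactor c V * 1 + lorentzFactor c V / c ^ 2 * (V ⬝ᵥ Q *ᵥ w) =
      lorentzFactor c V * (1 + (V ⬝ᵥ Q *ᵥ w) / c ^ 2)
    ring
  · change (lorentzFactor c V * 1) • V + (boostMatrix c V * Q) *ᵥ w =
      lorentzFactor c V • (V + (lorentzFactor c V)⁻¹ • (boostMatrix c V * Q) *ᵥ w)
    rw [mul_one, smul_add, smul_inv_smul₀ (lorentzFactor_pos hV).ne']

theorem lorentzMap_eq_smul (hV : ∑ i, V i ^ 2 < c ^ 2) {p : ℝ × (m → ℝ)} (hp : p.1 ≠ 0) :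
    lorentzMap c V Q p = (p.1 * lorentzFactor c V) •
      (1 + (V ⬝ᵥ Q *ᵥ velocity p) / c ^ 2,
        V + (lorentzFactor c V)⁻¹ • (boostMatrix c V * Q) *ᵥ velocity p) := by
  rw [mul_smul, ← lorentzMap_one_mk hV, ← map_smul, fst_smul_one_velocity hp]

theorem velocity_lorentzMap (hV : ∑ i, V i ^ 2 < c ^ 2) {p : ℝ × (m → ℝ)} (hp : p.1 ≠ 0) :
    velocity (lorentzMap c V Q p) = (1 + (V ⬝ᵥ Q *ᵥ velocity p) / c ^ 2)⁻¹ •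
      (V + (lorentzFactor c V)⁻¹ • (boostMatrix c V * Q) *ᵥ velocity p) := by
  rw [lorentzMap_eq_smul hV hp, velocity_smul (mul_ne_zero hp (lorentzFactor_pos hV).ne'),
    velocity]

theorem velocity_lorentzMap_of_eq_smul (hV : ∑ i, V i ^ 2 < c ^ 2) {p : ℝ × (m → ℝ)}
    (hp : p.1 ≠ 0) {a : ℝ} (hVp : V = a • Q *ᵥ velocity p) :
    velocity (lorentzMap c V Q p) =
      (1 + (V ⬝ᵥ Q *ᵥ velocity p) / c ^ 2)⁻¹ • (V + Q *ᵥ velocity p) := by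
  rw [velocity_lorentzMap hV hp, ← mulVec_mulVec, boostMatrix_mulVec_of_eq_smul hV hVp,
    inv_smul_smul₀ (lorentzFactor_pos hV).ne']

theorem one_add_dotProduct_div_ne_zero (hV : ∑ i, V i ^ 2 < c ^ 2) {p : ℝ × (m → ℝ)}
    (hp : p.1 ≠ 0) (hYp : (lorentzMap c V Q p).1 ≠ 0) :
    1 + (V ⬝ᵥ Q *ᵥ velocity p) / c ^ 2 ≠ 0 := by
  rw [lorentzMap_eq_smul hV hp] at hYp
  exact right_ne_zero_of_mul hYp

theorem stmt15_general (hV : ∑ i, V i ^ 2 < c ^ 2)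
    {tstar t : ℝ → ℝ} {ξstar : ℝ → m → ℝ} {ξ : ℝ → n → ℝ} {s : ℝ}
    (htstar : DifferentiableAt ℝ tstar s) (hξstar : DifferentiableAt ℝ ξstar s)
    (hY : ∀ r, (t r, ξ r) = lorentzMap c V Q (tstar r, ξstar r))
    (htd : deriv tstar s ≠ 0) (htd' : deriv t s ≠ 0)
    {ustar : m → ℝ} {u : n → ℝ} (hustar : ustar = velocity (deriv tstar s, deriv ξstar s))
    (hu : u = velocity (deriv t s, deriv ξ s)) :
    1 + (V ⬝ᵥ Q *ᵥ ustar) / c ^ 2 ≠ 0 ∧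
    u = (1 + (V ⬝ᵥ Q *ᵥ ustar) / c ^ 2)⁻¹ •
        (V + (lorentzFactor c V)⁻¹ • (boostMatrix c V * Q) *ᵥ ustar) ∧
    ((∃ a : ℝ, V = a • Q *ᵥ ustar) →
      u = (1 + (V ⬝ᵥ Q *ᵥ ustar) / c ^ 2)⁻¹ • (V + Q *ᵥ ustar)) := by
  have htangent : (deriv t s, deriv ξ s) = lorentzMap c V Q (deriv tstar s, deriv ξstar s) :=
    mk_deriv_eq_map_mk_deriv (lorentzMap c V Q).toContinuousLinearMap htstar hξstar hY
  have htime : (lorentzMap c V Q (deriv tstar s, deriv ξstar s)).1 ≠ 0 := by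
    rwa [← htangent]
  rw [htangent] at hu
  subst hustar hu
  exact ⟨one_add_dotProduct_div_ne_zero hV htd htime, velocity_lorentzMap hV htd,
    fun ⟨_, hVu⟩ => velocity_lorentzMap_of_eq_smul hV htd hVu⟩

end LorentzMap

theorem stmt15 (c : ℝ) (hc : 0 < c) (V : Fin 3 → ℝ)
    (hV : Real.sqrt (∑ i, V i ^ 2) < c)
    (Q : Matrix (Fin 3) (Fin 3) ℝ) (hQ : Qᵀ * Q = 1) (hdetQ : Q.det = 1)
    (tstar : ℝ → ℝ) (ξstar : ℝ → (Fin 3 → ℝ))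
    (htstar : Differentiable ℝ tstar) (hξstar : Differentiable ℝ ξstar)
    (t : ℝ → ℝ) (ξ : ℝ → (Fin 3 → ℝ))
    (ht : ∀ s, t s = gammaV c V * tstar s
      + (gammaV c V / c ^ 2) * (V ⬝ᵥ Q.mulVec (ξstar s)))
    (hξ : ∀ s, ξ s = (gammaV c V * tstar s) • V + (Bc c V * Q).mulVec (ξstar s))
    (s : ℝ) (htd : deriv tstar s ≠ 0) (htd' : deriv t s ≠ 0)
    (ustar u : Fin 3 → ℝ)
    (hustar : ustar = (deriv tstar s)⁻¹ • deriv ξstar s)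
    (hu : u = (deriv t s)⁻¹ • deriv ξ s)
    (hden : 0 < 1 + (V ⬝ᵥ Q.mulVec ustar) / c ^ 2) :
    u = (1 + (V ⬝ᵥ Q.mulVec ustar) / c ^ 2)⁻¹ •
        (V + (gammaV c V)⁻¹ • (Bc c V * Q).mulVec ustar) ∧
    (Q = 1 → (∃ a : ℝ, V = a • ustar) →
      u = (1 + (V ⬝ᵥ ustar) / c ^ 2)⁻¹ • (V + ustar)) := by
  obtain ⟨-, hvel, hpar⟩ := stmt15_general ((Real.sqrt_lt' hc).1 hV) (htstar s) (hξstar s)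
    (fun r => Prod.ext (ht r) (hξ r)) htd htd' hustar hu
  exact ⟨hvel, by rintro rfl; simpa only [one_mulVec] using hpar⟩
end
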